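/- Let E be a real Banach space, T > 0, and S : ℝ → E →L[ℝ] E a strongly continuous semigroup on [0,T]: S 0 = 1, S (s+t) = S s ∘L S t for s,t ≥ 0 with s+t ≤ T, the map s ↦ S s x is continuous on [0,T] for every x ∈ E, and there is M with ‖S s‖ ≤ M for all s ∈ [0,T]. Let λ ≥ 0 and let Ψ : [0,T] → E be continuous. Then for every t ∈ [0,T], ∫₀^t λ · ( ∫₀^{t−s} λ e^{−λ s'} · S (s+s') (Ψ(t−s−s')) ds' ) ds = ∫₀^t λ·(1 − e^{−λu}) · S u (Ψ(t−u)) du. -/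

import Mathlib

/-!
Substituting `u = s + s'` turns the iterated integral into one over the triangle
`0 < s < u ≤ t` whose integrand depends on `s` only through the scalar kernel evaluated at
`u - s`. Integrating in `s` first replaces the kernel by its primitive, here
`∫₀ᵘ λ exp (-λ r) dr = 1 - exp (-λ u)`.
-/

open MeasureTheory Set

section Triangle

variable {E : Type*} [NormedAddCommGroup E]

theorem intervalIntegral_integral_swap_triangle [NormedSpace ℝ E] {μ ν : Measure ℝ} [SFinite μ]
    [SFinite ν] [NullSingletonClass μ] {a b : ℝ} (hab : a ≤ b) {F : ℝ → ℝ → E}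
    (hF : IntegrableOn (Function.uncurry F) {p | a < p.1 ∧ p.1 < p.2 ∧ p.2 ≤ b} (μ.prod ν)) :
    ∫ s in a..b, ∫ u in s..b, F s u ∂ν ∂μ = ∫ u in a..b, ∫ s in a..u, F s u ∂μ ∂ν := by
  set Δ : Set (ℝ × ℝ) := {p | a < p.1 ∧ p.1 < p.2 ∧ p.2 ≤ b} with hΔ
  have hΔ_meas : MeasurableSet Δ := by measurability
  have inner_left : ∀ s ∈ Ioc a b,
      ∫ u in s..b, F s u ∂ν = ∫ u, Δ.indicator (Function.uncurry F) (s, u) ∂ν := by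
    intro s hs
    rw [intervalIntegral.integral_of_le hs.2, ← integral_indicator measurableSet_Ioc]
    congr with u
    simp [indicator_apply, hΔ, hs.1]
  have inner_right : ∀ u ∈ Ioc a b,
      ∫ s in a..u, F s u ∂μ = ∫ s, Δ.indicator (Function.uncurry F) (s, u) ∂μ := by
    intro u hu
    rw [intervalIntegral.integral_of_le hu.1.le, integral_Ioc_eq_integral_Ioo,
      ← integral_indicator measurableSet_Ioo]
    congr with s
    simp [indicator_apply, hΔ, hu.2]
  have zero_left : ∀ s ∉ Ioc a b, ∫ u, Δ.indicator (Function.uncurry F) (s, u) ∂ν = 0 := by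
    intro s hs
    refine integral_eq_zero_of_ae (.of_forall fun u => indicator_of_notMem (fun hp => ?_) _)
    exact hs ⟨hp.1, hp.2.1.le.trans hp.2.2⟩
  have zero_right : ∀ u ∉ Ioc a b, ∫ s, Δ.indicator (Function.uncurry F) (s, u) ∂μ = 0 := by
    intro u hu
    refine integral_eq_zero_of_ae (.of_forall fun s => indicator_of_notMem (fun hp => ?_) _)
    exact hu ⟨hp.1.trans hp.2.1, hp.2.2⟩
  rw [intervalIntegral.integral_of_le hab, intervalIntegral.integral_of_le hab,
    setIntegral_congr_fun measurableSet_Ioc inner_left,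
    setIntegral_congr_fun measurableSet_Ioc inner_right,
    setIntegral_eq_integral_of_forall_compl_eq_zero zero_left,
    setIntegral_eq_integral_of_forall_compl_eq_zero zero_right]
  exact integral_integral_swap ((integrable_indicator_iff hΔ_meas).2 hF)

variable {𝕜 : Type*} [RCLike 𝕜] [NormedSpace 𝕜 E] {a b : ℝ} {k : ℝ → 𝕜} {f : ℝ → E}

theorem integrableOn_triangle_sub_smul
    (hk : IntegrableOn k (Ioc 0 (b - a))) (hf : IntegrableOn f (Ioc a b)) :
    IntegrableOn (fun p : ℝ × ℝ => k (p.2 - p.1) • f p.2)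
      {p | a < p.1 ∧ p.1 < p.2 ∧ p.2 ≤ b} := by
  have hk' := ((integrable_indicator_iff measurableSet_Ioc).2 hk).comp_neg
  have hf' := (integrable_indicator_iff measurableSet_Ioc).2 hf
  have h := hf'.convolution_integrand (ContinuousLinearMap.lsmul 𝕜 𝕜).flip hk'
  refine h.integrableOn.congr_fun (fun p ⟨hap, hlt, hpb⟩ => ?_) (by measurability)
  have hsub : p.2 - p.1 ∈ Ioc 0 (b - a) := ⟨by linarith, by linarith⟩
  have hsnd : p.2 ∈ Ioc a b := ⟨hap.trans hlt, hpb⟩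
  simp only [ContinuousLinearMap.flip_apply, ContinuousLinearMap.lsmul_apply, neg_sub,
    indicator_of_mem hsub, indicator_of_mem hsnd]

theorem integral_integral_smul_add_eq_integral_primitive_smul [NormedSpace ℝ E]
    [CompleteSpace E] (hab : a ≤ b)
    (hk : IntervalIntegrable k volume 0 (b - a)) (hf : IntervalIntegrable f volume a b) :
    ∫ s in a..b, ∫ r in 0..(b - s), k r • f (s + r) =
      ∫ u in a..b, (∫ r in 0..(u - a), k r) • f u := by
  rw [intervalIntegrable_iff_integrableOn_Ioc_of_le (sub_nonneg.2 hab)] at hk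
  rw [intervalIntegrable_iff_integrableOn_Ioc_of_le hab] at hf
  calc ∫ s in a..b, ∫ r in 0..(b - s), k r • f (s + r)
      = ∫ s in a..b, ∫ u in s..b, k (u - s) • f u := by
        congr with s
        simpa using intervalIntegral.integral_comp_add_left (a := 0) (b := b - s)
          (fun u => k (u - s) • f u) s
    _ = ∫ u in a..b, ∫ s in a..u, k (u - s) • f u :=
        intervalIntegral_integral_swap_triangle hab (integrableOn_triangle_sub_smul hk hf)
    _ = ∫ u in a..b, (∫ r in 0..(u - a), k r) • f u := by
        simp only [intervalIntegral.integral_smul_const, intervalIntegral.integral_comp_sub_left,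
          sub_self]

end Triangle

theorem integral_mul_exp_neg_mul (c u : ℝ) :
    ∫ r in 0..u, c * Real.exp (-(c * r)) = 1 - Real.exp (-(c * u)) := by
  rw [intervalIntegral.integral_const_mul,
    intervalIntegral.mul_integral_comp_mul_left (f := fun x => Real.exp (-x))]
  simp

theorem continuousOn_clm_apply_of_norm_le {𝕜 X E F : Type*} [NontriviallyNormedField 𝕜]
    [TopologicalSpace X] [SeminormedAddCommGroup E] [NormedSpace 𝕜 E]
    [SeminormedAddCommGroup F] [NormedSpace 𝕜 F] {S : X → E →L[𝕜] F} {A : Set X} {M : ℝ}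
    (hS : ∀ x, ContinuousOn (fun s => S s x) A) (hM : ∀ s ∈ A, ‖S s‖ ≤ M)
    {g : X → E} (hg : ContinuousOn g A) : ContinuousOn (fun s => S s (g s)) A := by
  have hlip : ∀ s ∈ A, LipschitzOnWith M.toNNReal (S s) univ := fun s hs =>
    ((S s).lipschitz.weaken (NNReal.le_toNNReal_of_coe_le (hM s hs))).lipschitzOnWith
  have hjoint : ContinuousOn (fun p : E × X => S p.2 p.1) (univ ×ˢ A) :=
    continuousOn_prod_of_continuousOn_lipschitzOnWith _ _ (fun x _ => hS x) hlip
  exact hjoint.comp (hg.prodMk continuousOn_id) fun s hs => ⟨mem_univ _, hs⟩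

theorem double_integral_collapse_general {E F : Type*} [NormedAddCommGroup E] [NormedSpace ℝ E]
    [NormedAddCommGroup F] [NormedSpace ℝ F] [CompleteSpace F] {T : ℝ} {S : ℝ → E →L[ℝ] F}
    (hScont : ∀ x : E, ContinuousOn (fun s => S s x) (Icc 0 T))
    {M : ℝ} (hM : ∀ s ∈ Icc (0 : ℝ) T, ‖S s‖ ≤ M) (lam : ℝ)
    {Ψ : ℝ → E} (hΨ : ContinuousOn Ψ (Icc 0 T)) :
    ∀ t ∈ Icc (0 : ℝ) T,
      (∫ s in (0 : ℝ)..t,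
        lam • ∫ s' in (0 : ℝ)..(t - s),
          (lam * Real.exp (-(lam * s'))) • S (s + s') (Ψ (t - s - s')))
      = ∫ u in (0 : ℝ)..t,
          (lam * (1 - Real.exp (-(lam * u)))) • S u (Ψ (t - u)) := by
  intro t ht
  have hsub : Icc 0 t ⊆ Icc 0 T := Icc_subset_Icc_right ht.2
  have hreflect : MapsTo (fun u => t - u) (Icc 0 t) (Icc 0 T) := fun u hu =>
    hsub ⟨sub_nonneg.2 hu.2, sub_le_self t hu.1⟩
  have hcont : ContinuousOn (fun u => S u (Ψ (t - u))) (Icc 0 t) :=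
    continuousOn_clm_apply_of_norm_le (fun x => (hScont x).mono hsub) (fun s hs => hM s (hsub hs))
      (hΨ.comp (by fun_prop) hreflect)
  have hcollapse := integral_integral_smul_add_eq_integral_primitive_smul ht.1
    (k := fun r => lam * Real.exp (-(lam * r)))
    (Continuous.intervalIntegrable (by fun_prop) _ _) (hcont.intervalIntegrable_of_Icc ht.1)
  simp only [sub_zero, integral_mul_exp_neg_mul] at hcollapse
  simp_rw [sub_sub, mul_smul lam (1 - _), intervalIntegral.integral_smul, hcollapse]

/-- The double-integral collapse (change of variables `u = s + s'` plus the
semigroup property) used in the derivation of the Markov identity (MF4)-(MF6):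
`∫₀ᵗ λ (∫₀^{t-s} λ e^{-λs'} S_{s+s'} Ψ(t-s-s') ds') ds
  = ∫₀ᵗ λ (1 - e^{-λu}) S_u Ψ(t-u) du`. -/
theorem double_integral_collapse
    {E : Type*} [NormedAddCommGroup E] [NormedSpace ℝ E] [CompleteSpace E]
    (T : ℝ) (hT : 0 < T) (S : ℝ → E →L[ℝ] E)
    (hS0 : S 0 = 1)
    (hSadd : ∀ s t : ℝ, 0 ≤ s → 0 ≤ t → s + t ≤ T → S (s + t) = (S s).comp (S t))
    (hScont : ∀ x : E, ContinuousOn (fun s => S s x) (Set.Icc 0 T))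
    (M : ℝ) (hM : ∀ s ∈ Set.Icc (0 : ℝ) T, ‖S s‖ ≤ M)
    (lam : ℝ) (hlam : 0 ≤ lam) (Ψ : ℝ → E) (hΨ : ContinuousOn Ψ (Set.Icc 0 T)) :
    ∀ t ∈ Set.Icc (0 : ℝ) T,
      (∫ s in (0 : ℝ)..t,
        lam • ∫ s' in (0 : ℝ)..(t - s),
          (lam * Real.exp (-(lam * s'))) • S (s + s') (Ψ (t - s - s')))
      = ∫ u in (0 : ℝ)..t,
          (lam * (1 - Real.exp (-(lam * u)))) • S u (Ψ (t - u)) :=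
  double_integral_collapse_general hScont hM lam hΨ
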